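/- arXiv:2404.18164 — 3 statements merged into one kernel-verified Lean document; each statement's English description precedes it below -/
import Mathlib

section
/- The value of f' at zero is given explicitly by f'(0) = exp(L·R₁²/4)·κ^{-1} + (exp(L·R₁²/4) − 1)·L^{-1}, where f'(r) := (1/2)∫_r^∞ s·exp(−(1/2)∫_r^s x·θ(x) dx) ds. -/
/-- The piecewise function `θ(x) = -L` for `x < R₁` and `θ(x) = κ` for `x ≥ R₁`. -/
noncomputable def theta (κ L R₁ : ℝ) : ℝ → ℝ := fun x => if x < R₁ then -L else κ

/-- `f'(r) = (1/2)∫_r^∞ s · exp(-(1/2)∫_r^s x·θ(x) dx) ds`. -/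
noncomputable def fPrime (κ L R₁ : ℝ) (r : ℝ) : ℝ :=
  (1 / 2) * ∫ s in Set.Ioi r, s * Real.exp (-(1 / 2) * ∫ x in r..s, x * theta κ L R₁ x)

/-!
With `w(r, s) = exp(-(1/2)∫_r^s x·θ(x) dx)`, the cocycle identity `w(r, s) = w(r, t)·w(t, s)` gives
`f'(r) = (1/2)∫_r^t s·w(r, s) ds + w(r, t)·f'(t)`. Taking `t = R₁` separates the two regimes of `θ`:
on either side of `R₁` the integrand is a multiple of `s·exp(c·s²)`, which has the primitive
`exp(c·s²)/(2c)`, with `c = L/4` to the left and `c = -κ/4` to the right.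
-/

open MeasureTheory Set Filter Topology

section GaussianMoment

lemma hasDerivAt_exp_mul_sq_div {c : ℝ} (hc : c ≠ 0) (x : ℝ) :
    HasDerivAt (fun s => Real.exp (c * s ^ 2) / (2 * c)) (x * Real.exp (c * x ^ 2)) x := by
  refine ((((hasDerivAt_pow 2 x).const_mul c).exp).div_const (2 * c)).congr_deriv ?_
  field_simp
  norm_num [mul_comm]

lemma integral_mul_exp_mul_sq {c : ℝ} (hc : c ≠ 0) (a b : ℝ) :
    ∫ s in a..b, s * Real.exp (c * s ^ 2) =
      (Real.exp (c * b ^ 2) - Real.exp (c * a ^ 2)) / (2 * c) := by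
  have hcont : Continuous fun s : ℝ => s * Real.exp (c * s ^ 2) := by fun_prop
  rw [intervalIntegral.integral_eq_sub_of_hasDerivAt
    (fun x _ => hasDerivAt_exp_mul_sq_div hc x) (hcont.intervalIntegrable a b), sub_div]

lemma integral_Ioi_mul_exp_neg_mul_sq {b : ℝ} (hb : 0 < b) (a : ℝ) :
    ∫ s in Ioi a, s * Real.exp (-b * s ^ 2) = Real.exp (-b * a ^ 2) / (2 * b) := by
  have hlim : Tendsto (fun s : ℝ => Real.exp (-b * s ^ 2) / (2 * -b)) atTop (𝓝 0) := by
    have hexp : Tendsto (fun s : ℝ => -b * s ^ 2) atTop atBot :=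
      (tendsto_pow_atTop two_ne_zero).const_mul_atTop_of_neg (neg_neg_of_pos hb)
    simpa only [zero_div, Function.comp_def] using
      (Real.tendsto_exp_atBot.comp hexp).div_const (2 * -b)
  rw [integral_Ioi_of_hasDerivAt_of_tendsto'
    (fun x _ => hasDerivAt_exp_mul_sq_div (neg_ne_zero.mpr hb.ne') x)
    (integrable_mul_exp_neg_mul_sq hb).integrableOn hlim, zero_sub, mul_neg, div_neg, neg_neg]

end GaussianMoment

section Drift

variable {κ L R₁ r s : ℝ}

lemma intervalIntegrable_mul_theta (κ L R₁ a b : ℝ) :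
    IntervalIntegrable (fun x => x * theta κ L R₁ x) volume a b := by
  have hpiece : (fun x => x * theta κ L R₁ x) =
      (Iio R₁).piecewise (fun x => x * -L) (fun x => x * κ) := by
    ext x
    simp only [theta, piecewise, mem_Iio, mul_ite]
  have hlin (c : ℝ) : IntegrableOn (fun x : ℝ => x * c) (uIoc a b) :=
    intervalIntegrable_iff.mp ((continuous_mul_const c).intervalIntegrable a b)
  rw [intervalIntegrable_iff, hpiece]
  exact Integrable.piecewise measurableSet_Iio (hlin _).integrableOn (hlin _).integrableOn

lemma integral_mul_theta_of_le (hr : r ≤ R₁) (hs : s ≤ R₁) :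
    ∫ x in r..s, x * theta κ L R₁ x = -L * (s ^ 2 - r ^ 2) / 2 := by
  have hθ : EqOn (fun x => x * theta κ L R₁ x) (fun x => x * -L) (uIoo r s) := fun x hx => by
    simp only [theta, if_pos (hx.2.trans_le (sup_le hr hs))]
  rw [intervalIntegral.integral_congr_uIoo hθ, intervalIntegral.integral_mul_const, integral_id]
  ring

lemma integral_mul_theta_of_ge (hr : R₁ ≤ r) (hs : R₁ ≤ s) :
    ∫ x in r..s, x * theta κ L R₁ x = κ * (s ^ 2 - r ^ 2) / 2 := by
  have hθ : EqOn (fun x => x * theta κ L R₁ x) (fun x => x * κ) (uIcc r s) := fun x hx => by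
    simp only [theta, if_neg (not_lt.mpr ((le_inf hr hs).trans hx.1))]
  rw [intervalIntegral.integral_congr hθ, intervalIntegral.integral_mul_const, integral_id]
  ring

end Drift

section Weight

/-- The weight `exp(-(1/2)∫_r^s x·θ(x) dx)` in the integrand of `fPrime`. -/
noncomputable def thetaWeight (κ L R₁ r s : ℝ) : ℝ :=
  Real.exp (-(1 / 2) * ∫ x in r..s, x * theta κ L R₁ x)

variable {κ L R₁ r s : ℝ}

lemma fPrime_eq_integral_thetaWeight (κ L R₁ r : ℝ) :
    fPrime κ L R₁ r = (1 / 2) * ∫ s in Ioi r, s * thetaWeight κ L R₁ r s :=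
  rfl

lemma thetaWeight_mul (κ L R₁ r t s : ℝ) :
    thetaWeight κ L R₁ r t * thetaWeight κ L R₁ t s = thetaWeight κ L R₁ r s := by
  simp only [thetaWeight]
  rw [← Real.exp_add, ← mul_add, intervalIntegral.integral_add_adjacent_intervals
    (intervalIntegrable_mul_theta κ L R₁ r t) (intervalIntegrable_mul_theta κ L R₁ t s)]

lemma thetaWeight_of_le (hr : r ≤ R₁) (hs : s ≤ R₁) :
    thetaWeight κ L R₁ r s = Real.exp (L / 4 * s ^ 2) / Real.exp (L / 4 * r ^ 2) := by
  rw [thetaWeight, integral_mul_theta_of_le hr hs, ← Real.exp_sub]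
  ring_nf

lemma thetaWeight_of_ge (hr : R₁ ≤ r) (hs : R₁ ≤ s) :
    thetaWeight κ L R₁ r s = Real.exp (-(κ / 4) * s ^ 2) / Real.exp (-(κ / 4) * r ^ 2) := by
  rw [thetaWeight, integral_mul_theta_of_ge hr hs, ← Real.exp_sub]
  ring_nf

lemma continuous_thetaWeight (κ L R₁ r : ℝ) : Continuous (thetaWeight κ L R₁ r) :=
  Real.continuous_exp.comp <| continuous_const.mul <|
    intervalIntegral.continuous_primitive (intervalIntegrable_mul_theta κ L R₁) r

lemma integrableOn_Ioi_mul_thetaWeight (hκ : 0 < κ) (L R₁ r a : ℝ) :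
    IntegrableOn (fun s => s * thetaWeight κ L R₁ r s) (Ioi a) := by
  have hcompact : IntegrableOn (fun s => s * thetaWeight κ L R₁ r s) (Icc a R₁) :=
    (continuous_id.mul (continuous_thetaWeight κ L R₁ r)).continuousOn.integrableOn_Icc
  have htail : IntegrableOn (fun s => s * thetaWeight κ L R₁ r s) (Ioi R₁) := by
    have hgauss : IntegrableOn (fun s => thetaWeight κ L R₁ r R₁ / Real.exp (-(κ / 4) * R₁ ^ 2) *
        (s * Real.exp (-(κ / 4) * s ^ 2))) (Ioi R₁) :=
      ((integrable_mul_exp_neg_mul_sq (by positivity)).const_mul _).integrableOn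
    refine hgauss.congr_fun (fun s hs => ?_) measurableSet_Ioi
    dsimp only
    rw [← thetaWeight_mul κ L R₁ r R₁ s, thetaWeight_of_ge le_rfl (le_of_lt hs)]
    ring
  refine (hcompact.union htail).mono_set fun s (hs : a < s) => ?_
  exact (le_or_gt s R₁).imp (fun hsR => ⟨hs.le, hsR⟩) id

end Weight

section Value

variable {κ L R₁ r : ℝ}

lemma fPrime_eq_integral_add_mul_fPrime (hκ : 0 < κ) (L R₁ r t : ℝ) :
    fPrime κ L R₁ r = (1 / 2) * (∫ s in r..t, s * thetaWeight κ L R₁ r s) +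
      thetaWeight κ L R₁ r t * fPrime κ L R₁ t := by
  have htail : ∫ s in Ioi t, s * thetaWeight κ L R₁ r s =
      thetaWeight κ L R₁ r t * ∫ s in Ioi t, s * thetaWeight κ L R₁ t s := by
    rw [← integral_const_mul]
    congr with s
    rw [← thetaWeight_mul κ L R₁ r t s, mul_left_comm]
  rw [fPrime_eq_integral_thetaWeight, fPrime_eq_integral_thetaWeight,
    ← intervalIntegral.integral_interval_add_Ioi (integrableOn_Ioi_mul_thetaWeight hκ L R₁ r r)
      (integrableOn_Ioi_mul_thetaWeight hκ L R₁ r t), htail]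
  ring

lemma fPrime_of_ge (hκ : 0 < κ) (hr : R₁ ≤ r) : fPrime κ L R₁ r = κ⁻¹ := by
  have hweight : EqOn (fun s => s * thetaWeight κ L R₁ r s)
      (fun s => s * Real.exp (-(κ / 4) * s ^ 2) / Real.exp (-(κ / 4) * r ^ 2)) (Ioi r) :=
    fun s hs => by
      dsimp only
      rw [thetaWeight_of_ge hr (hr.trans (le_of_lt hs)), mul_div_assoc]
  rw [fPrime_eq_integral_thetaWeight, setIntegral_congr_fun measurableSet_Ioi hweight,
    integral_div, integral_Ioi_mul_exp_neg_mul_sq (by positivity)]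
  field_simp
  norm_num

lemma integral_mul_thetaWeight_of_le (hL : L ≠ 0) (hr : r ≤ R₁) :
    ∫ s in r..R₁, s * thetaWeight κ L R₁ r s = 2 * (thetaWeight κ L R₁ r R₁ - 1) * L⁻¹ := by
  have hweight : EqOn (fun s => s * thetaWeight κ L R₁ r s)
      (fun s => s * Real.exp (L / 4 * s ^ 2) / Real.exp (L / 4 * r ^ 2)) (uIcc r R₁) :=
    fun s hs => by
      rw [uIcc_of_le hr] at hs
      dsimp only
      rw [thetaWeight_of_le hr hs.2, mul_div_assoc]
  rw [intervalIntegral.integral_congr hweight, intervalIntegral.integral_div,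
    integral_mul_exp_mul_sq (by positivity), thetaWeight_of_le hr le_rfl]
  field_simp
  ring

theorem fPrime_zero_eq_general (hκ : 0 < κ) (hL : L ≠ 0) (hr : r ≤ R₁) :
    fPrime κ L R₁ r = Real.exp (L * (R₁ ^ 2 - r ^ 2) / 4) * κ⁻¹ +
      (Real.exp (L * (R₁ ^ 2 - r ^ 2) / 4) - 1) * L⁻¹ := by
  have hweight : thetaWeight κ L R₁ r R₁ = Real.exp (L * (R₁ ^ 2 - r ^ 2) / 4) := by
    rw [thetaWeight_of_le hr le_rfl, ← Real.exp_sub]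
    ring_nf
  rw [fPrime_eq_integral_add_mul_fPrime hκ L R₁ r R₁, integral_mul_thetaWeight_of_le hL hr,
    fPrime_of_ge hκ le_rfl, hweight]
  ring

end Value

/-- explicit value of `f'` at zero:
`f'(0) = exp(L·R₁²/4)·κ⁻¹ + (exp(L·R₁²/4) − 1)·L⁻¹`. -/
theorem fPrime_zero_eq (κ L R₁ : ℝ) (hκ : 0 < κ) (hL : 0 < L) (hR₁ : 0 ≤ R₁) :
    fPrime κ L R₁ 0 =
      Real.exp (L * R₁ ^ 2 / 4) * κ⁻¹ + (Real.exp (L * R₁ ^ 2 / 4) - 1) * L⁻¹ := by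
  simpa using fPrime_zero_eq_general hκ hL.ne' hR₁
end

section
/- The function f'(r) := (1/2)∫_r^∞ s·exp(−(1/2)∫_r^s x·θ(x) dx) ds is nonincreasing on [0, ∞); consequently, for every r ≥ 0 one has 1/κ ≤ f'(r) ≤ f'(0), where f'(0) = exp(L·R₁²/4)·κ^{-1} + (exp(L·R₁²/4) − 1)·L^{-1}. -/
/-!
Substituting `v = (s² - r²) / 4` and `w = (x² - r²) / 4` turns the defining integral into
`f'(r) = ∫_0^∞ exp(-∫_0^v θ(√(r² + 4 w)) dw) dv`, the mean lifetime for the hazard rate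
`w ↦ θ(√(r² + 4 w))`. The hazard rate is nondecreasing in `r` because `θ` is nondecreasing, and it
is at most `κ`. A larger hazard rate gives a shorter mean lifetime, so `f'` is nonincreasing and at
least the mean lifetime `1/κ` of the constant rate `κ`. At `r = 0` the hazard rate is `-L` up to
time `R₁² / 4` and `κ` afterwards, and conditioning on survival up to that time gives the value.
-/

open MeasureTheory Set Filter Topology

theorem integral_Ioi_comp_mul_deriv_of_deriv_pos {f f' g : ℝ → ℝ} {a : ℝ}
    (hf : ContinuousOn f (Ici a)) (hff' : ∀ x ∈ Ioi a, HasDerivAt f (f' x) x)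
    (hf' : ∀ x ∈ Ioi a, 0 < f' x) (hftop : Tendsto f atTop atTop) :
    ∫ x in Ioi a, g (f x) * f' x = ∫ u in Ioi (f a), g u := by
  have hmono : StrictMonoOn f (Ici a) := by
    refine strictMonoOn_of_hasDerivWithinAt_pos (f' := f') (convex_Ici a) hf ?_ ?_ <;>
      rw [interior_Ici]
    · exact fun x hx => (hff' x hx).hasDerivWithinAt
    · exact hf'
  rw [← hf.image_Ioi_of_strictMonoOn hmono hftop,
    integral_image_eq_integral_deriv_smul_of_monotoneOn measurableSet_Ioi
      (fun x hx => (hff' x hx).hasDerivWithinAt) (hmono.monotoneOn.mono Ioi_subset_Ici_self)]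
  simp only [smul_eq_mul, mul_comm]

/-- The survival function of the hazard rate `h`: the probability that a lifetime with this rate
exceeds `v`. It is defined for rates of any sign, hence need not be nonincreasing. -/
noncomputable def survival (h : ℝ → ℝ) (v : ℝ) : ℝ := Real.exp (-∫ w in 0..v, h w)

/-- The mean lifetime of the hazard rate `h`, written as the integral of the survival function. It
has the junk value `0` if the survival function is not integrable. -/
noncomputable def meanLifetime (h : ℝ → ℝ) : ℝ := ∫ v in Ioi 0, survival h v

section Survival

variable {h h₁ h₂ : ℝ → ℝ}

theorem survival_nonneg (h : ℝ → ℝ) (v : ℝ) : 0 ≤ survival h v := (Real.exp_pos _).le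

theorem survival_congr {v : ℝ} (hv : 0 ≤ v) (heq : EqOn h₁ h₂ (Ioo 0 v)) :
    survival h₁ v = survival h₂ v := by
  rw [survival, survival, intervalIntegral.integral_congr_Ioo_of_le hv heq]

theorem survival_const (c v : ℝ) : survival (fun _ => c) v = Real.exp (-c * v) := by
  simp [survival, mul_comm]

theorem survival_add (hh : ∀ a b, IntervalIntegrable h volume a b) (t v : ℝ) :
    survival h (v + t) = survival h t * survival (fun w => h (w + t)) v := by
  rw [survival, survival, survival, ← Real.exp_add, intervalIntegral.integral_comp_add_right,
    zero_add, ← neg_add, intervalIntegral.integral_add_adjacent_intervals (hh _ _) (hh _ _)]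

theorem survival_anti {v : ℝ} (hv : 0 ≤ v) (hh₁ : IntervalIntegrable h₁ volume 0 v)
    (hh₂ : IntervalIntegrable h₂ volume 0 v) (hle : ∀ w, 0 ≤ w → h₁ w ≤ h₂ w) :
    survival h₂ v ≤ survival h₁ v :=
  Real.exp_le_exp.2 <| neg_le_neg <|
    intervalIntegral.integral_mono_on hv hh₁ hh₂ fun w hw => hle w hw.1

theorem continuous_survival (hh : ∀ a b, IntervalIntegrable h volume a b) :
    Continuous (survival h) :=
  (intervalIntegral.continuous_primitive hh 0).neg.rexp

theorem integrableOn_survival (hh : ∀ a b, IntervalIntegrable h volume a b) {c : ℝ} (hc : 0 < c)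
    (hlarge : ∀ᶠ w in atTop, c ≤ h w) : IntegrableOn (survival h) (Ioi 0) := by
  obtain ⟨t, ht⟩ := eventually_atTop.1 hlarge
  refine integrable_of_isBigO_exp_neg hc (continuous_survival hh).continuousOn
    (Asymptotics.IsBigO.of_bound (survival h t * Real.exp (c * t)) ?_)
  filter_upwards [eventually_ge_atTop t] with v hv
  have hdecay : survival (fun w => h (w + t)) (v - t) ≤ survival (fun _ => c) (v - t) :=
    survival_anti (sub_nonneg.2 hv) intervalIntegrable_const
      (by simpa using (hh t v).comp_add_right t) fun w hw => ht _ (by linarith)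
  rw [Real.norm_of_nonneg (survival_nonneg h v), Real.norm_of_nonneg (Real.exp_pos _).le]
  calc survival h v = survival h t * survival (fun w => h (w + t)) (v - t) := by
        rw [← survival_add hh, sub_add_cancel]
    _ ≤ survival h t * Real.exp (-c * (v - t)) := by
        rw [← survival_const]
        exact mul_le_mul_of_nonneg_left hdecay (survival_nonneg h t)
    _ = survival h t * Real.exp (c * t) * Real.exp (-c * v) := by
        rw [mul_assoc, ← Real.exp_add]
        ring_nf

end Survival

section MeanLifetime

variable {h h₁ h₂ : ℝ → ℝ}

theorem meanLifetime_congr (heq : EqOn h₁ h₂ (Ioi 0)) : meanLifetime h₁ = meanLifetime h₂ :=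
  setIntegral_congr_fun measurableSet_Ioi fun _ hv =>
    survival_congr (le_of_lt hv) (heq.mono Ioo_subset_Ioi_self)

theorem meanLifetime_const {c : ℝ} (hc : 0 < c) : meanLifetime (fun _ => c) = c⁻¹ := by
  simp only [meanLifetime, survival_const]
  rw [integral_exp_mul_Ioi (neg_lt_zero.2 hc)]
  simp

theorem meanLifetime_anti (hh₁ : ∀ a b, IntervalIntegrable h₁ volume a b)
    (hh₂ : ∀ a b, IntervalIntegrable h₂ volume a b) (hint : IntegrableOn (survival h₁) (Ioi 0))
    (hle : ∀ w, 0 ≤ w → h₁ w ≤ h₂ w) : meanLifetime h₂ ≤ meanLifetime h₁ :=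
  integral_mono_of_nonneg (Eventually.of_forall (survival_nonneg h₂)) hint <|
    (ae_restrict_mem measurableSet_Ioi).mono fun _ hv =>
      survival_anti (le_of_lt hv) (hh₁ _ _) (hh₂ _ _) hle

theorem meanLifetime_eq_integral_add (hh : ∀ a b, IntervalIntegrable h volume a b)
    (hint : IntegrableOn (survival h) (Ioi 0)) {t : ℝ} (ht : 0 ≤ t) :
    meanLifetime h =
      (∫ v in 0..t, survival h v) + survival h t * meanLifetime (fun w => h (w + t)) := by
  have hshift : ∫ v in Ioi t, survival h v = ∫ v in Ioi 0, survival h (v + t) := by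
    simpa using (integral_Ioi_comp_mul_deriv_of_deriv_pos (g := survival h) (a := 0)
      (continuous_add_const t).continuousOn (fun x _ => (hasDerivAt_id x).add_const t)
      (fun _ _ => one_pos) (tendsto_atTop_add_const_right _ t tendsto_id)).symm
  rw [meanLifetime, ← intervalIntegral.integral_interval_add_Ioi hint
    (hint.mono_set (Ioi_subset_Ioi ht)), hshift]
  simp only [survival_add hh, integral_const_mul, meanLifetime]

end MeanLifetime

/-- The hazard rate whose mean lifetime is `f'(r)`: the drift `θ` read off at the radius
`√(r² + 4 w)`, where `w` is the time variable. -/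
noncomputable def radialHazard (θ : ℝ → ℝ) (r w : ℝ) : ℝ := θ (√(r ^ 2 + 4 * w))

section RadialHazard

variable {θ : ℝ → ℝ} {r : ℝ}

theorem radialHazard_sq_sub {s : ℝ} (hs : 0 ≤ s) :
    radialHazard θ r ((s ^ 2 - r ^ 2) / 4) = θ s := by
  rw [radialHazard, mul_div_cancel₀ _ four_ne_zero, add_sub_cancel, Real.sqrt_sq hs]

theorem hasDerivAt_sq_sub_div_four (r x : ℝ) :
    HasDerivAt (fun x => (x ^ 2 - r ^ 2) / 4) (x / 2) x := by
  refine (((hasDerivAt_pow 2 x).sub_const (r ^ 2)).div_const 4).congr_deriv ?_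
  norm_num
  ring

theorem survival_radialHazard (θ : ℝ → ℝ) {s : ℝ} (hr : 0 ≤ r) (hrs : r ≤ s) :
    survival (radialHazard θ r) ((s ^ 2 - r ^ 2) / 4) =
      Real.exp (-(1 / 2) * ∫ x in r..s, x * θ x) := by
  have hsubst : ∫ x in r..s, radialHazard θ r ((x ^ 2 - r ^ 2) / 4) * (x / 2) =
      ∫ w in 0..(s ^ 2 - r ^ 2) / 4, radialHazard θ r w := by
    simpa only [Function.comp_apply, sub_self, zero_div] using
      intervalIntegral.integral_comp_mul_deriv_of_deriv_nonneg
        (a := r) (b := s) (f := fun x => (x ^ 2 - r ^ 2) / 4) (g := radialHazard θ r) (by fun_prop)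
        (fun x _ => hasDerivAt_sq_sub_div_four r x)
        (fun x hx => by rw [min_eq_left hrs] at hx; linarith [hx.1])
  have hcongr : ∫ x in r..s, radialHazard θ r ((x ^ 2 - r ^ 2) / 4) * (x / 2) =
      ∫ x in r..s, 1 / 2 * (x * θ x) := by
    refine intervalIntegral.integral_congr_Ioo_of_le hrs fun x hx => ?_
    simp only [radialHazard_sq_sub (hr.trans hx.1.le)]
    ring
  rw [survival, ← hsubst, hcongr, intervalIntegral.integral_const_mul, neg_mul]

theorem meanLifetime_radialHazard (θ : ℝ → ℝ) (hr : 0 ≤ r) :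
    meanLifetime (radialHazard θ r) =
      (1 / 2) * ∫ s in Ioi r, s * Real.exp (-(1 / 2) * ∫ x in r..s, x * θ x) := by
  have htop : Tendsto (fun s : ℝ => (s ^ 2 - r ^ 2) / 4) atTop atTop :=
    (tendsto_atTop_add_const_right _ _ (tendsto_pow_atTop two_ne_zero)).atTop_div_const four_pos
  have hsubst : ∫ s in Ioi r, survival (radialHazard θ r) ((s ^ 2 - r ^ 2) / 4) * (s / 2) =
      meanLifetime (radialHazard θ r) := by
    rw [integral_Ioi_comp_mul_deriv_of_deriv_pos (by fun_prop)
      (fun x _ => hasDerivAt_sq_sub_div_four r x) (fun x hx => half_pos (hr.trans_lt hx)) htop]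
    simp [meanLifetime]
  rw [← hsubst, ← integral_const_mul]
  refine setIntegral_congr_fun measurableSet_Ioi fun s hs => ?_
  simp only [survival_radialHazard θ hr (le_of_lt hs)]
  ring

theorem monotone_radialHazard (hθ : MonotoneOn θ (Ici 0)) (r : ℝ) :
    Monotone (radialHazard θ r) := fun _ _ hw =>
  hθ (Real.sqrt_nonneg _) (Real.sqrt_nonneg _) (Real.sqrt_le_sqrt (by gcongr))

theorem integrableOn_survival_radialHazard (hθ : MonotoneOn θ (Ici 0)) {c : ℝ} (hc : 0 < c)
    (hlarge : ∀ᶠ x in atTop, c ≤ θ x) (r : ℝ) :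
    IntegrableOn (survival (radialHazard θ r)) (Ioi 0) := by
  have hradius : Tendsto (fun w : ℝ => √(r ^ 2 + 4 * w)) atTop atTop :=
    Real.tendsto_sqrt_atTop.comp <|
      tendsto_atTop_add_const_left _ _ (tendsto_id.const_mul_atTop four_pos)
  exact integrableOn_survival (fun _ _ => (monotone_radialHazard hθ r).intervalIntegrable) hc
    (hradius.eventually hlarge)

theorem antitoneOn_meanLifetime_radialHazard (hθ : MonotoneOn θ (Ici 0)) {c : ℝ} (hc : 0 < c)
    (hlarge : ∀ᶠ x in atTop, c ≤ θ x) :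
    AntitoneOn (fun r => meanLifetime (radialHazard θ r)) (Ici 0) := fun r hr s _ hrs =>
  meanLifetime_anti (fun _ _ => (monotone_radialHazard hθ r).intervalIntegrable)
    (fun _ _ => (monotone_radialHazard hθ s).intervalIntegrable)
    (integrableOn_survival_radialHazard hθ hc hlarge r) fun w _ =>
      hθ (Real.sqrt_nonneg _) (Real.sqrt_nonneg _)
        (Real.sqrt_le_sqrt (by have := mem_Ici.1 hr; gcongr))

theorem inv_le_meanLifetime_radialHazard (hθ : MonotoneOn θ (Ici 0)) {c C : ℝ} (hc : 0 < c)
    (hlarge : ∀ᶠ x in atTop, c ≤ θ x) (hle : ∀ x, 0 ≤ x → θ x ≤ C) (r : ℝ) :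
    C⁻¹ ≤ meanLifetime (radialHazard θ r) := by
  obtain ⟨x, hcx, hx⟩ := (hlarge.and (eventually_ge_atTop 0)).exists
  rw [← meanLifetime_const (hc.trans_le (hcx.trans (hle x hx)))]
  exact meanLifetime_anti (fun _ _ => (monotone_radialHazard hθ r).intervalIntegrable)
    (fun _ _ => intervalIntegrable_const) (integrableOn_survival_radialHazard hθ hc hlarge r)
    fun _ _ => hle _ (Real.sqrt_nonneg _)

end RadialHazard

section Theta

variable {κ L R₁ : ℝ}

theorem theta_of_lt {x : ℝ} (hx : x < R₁) : theta κ L R₁ x = -L := if_pos hx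

theorem theta_of_le {x : ℝ} (hx : R₁ ≤ x) : theta κ L R₁ x = κ := if_neg hx.not_gt

theorem monotone_theta (hκL : -L ≤ κ) : Monotone (theta κ L R₁) := by
  intro x y hxy
  unfold theta
  split_ifs <;> linarith

theorem antitone_theta (hκL : κ ≤ -L) : Antitone (theta κ L R₁) := by
  intro x y hxy
  unfold theta
  split_ifs <;> linarith

theorem intervalIntegrable_theta (a b : ℝ) : IntervalIntegrable (theta κ L R₁) volume a b :=
  (le_total (-L) κ).elim (fun hκL => (monotone_theta hκL).intervalIntegrable)
    fun hκL => (antitone_theta hκL).intervalIntegrable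

theorem eventually_le_theta : ∀ᶠ x in atTop, κ ≤ theta κ L R₁ x :=
  (eventually_ge_atTop R₁).mono fun _ hx => (theta_of_le hx).ge

theorem survival_theta {t v : ℝ} (hv : 0 ≤ v) (hvt : v ≤ t) :
    survival (theta κ L t) v = Real.exp (L * v) := by
  have hconst : EqOn (theta κ L t) (fun _ => -L) (Ioo 0 v) := fun _ hw =>
    theta_of_lt (hw.2.trans_le hvt)
  rw [survival_congr hv hconst, survival_const, neg_neg]

theorem meanLifetime_theta (hκ : 0 < κ) (hL : L ≠ 0) {t : ℝ} (ht : 0 ≤ t) :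
    meanLifetime (theta κ L t) = Real.exp (L * t) * κ⁻¹ + (Real.exp (L * t) - 1) * L⁻¹ := by
  have hbefore : ∫ v in 0..t, survival (theta κ L t) v = (Real.exp (L * t) - 1) * L⁻¹ := by
    have hexp : EqOn (survival (theta κ L t)) (fun v => Real.exp (L * v)) (Ioo 0 t) := fun _ hv =>
      survival_theta hv.1.le hv.2.le
    rw [intervalIntegral.integral_congr_Ioo_of_le ht hexp,
      intervalIntegral.integral_comp_mul_left _ hL, integral_exp, mul_zero, Real.exp_zero,
      smul_eq_mul, mul_comm]
  have hafter : meanLifetime (fun w => theta κ L t (w + t)) = κ⁻¹ := by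
    rw [← meanLifetime_const hκ]
    exact meanLifetime_congr fun w hw => theta_of_le (le_add_of_nonneg_left (le_of_lt hw))
  rw [meanLifetime_eq_integral_add intervalIntegrable_theta
    (integrableOn_survival intervalIntegrable_theta hκ eventually_le_theta) ht, hbefore, hafter,
    survival_theta ht le_rfl, add_comm]

theorem radialHazard_theta_zero (hR₁ : 0 ≤ R₁) {w : ℝ} (hw : 0 ≤ w) :
    radialHazard (theta κ L R₁) 0 w = theta κ L (R₁ ^ 2 / 4) w := by
  have hiff : √(0 ^ 2 + 4 * w) < R₁ ↔ w < R₁ ^ 2 / 4 := by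
    rw [Real.sqrt_lt (by positivity) hR₁, lt_div_iff₀' four_pos]
    simp
  simp only [radialHazard, theta, hiff]

theorem fPrime_eq_meanLifetime {r : ℝ} (hr : 0 ≤ r) :
    fPrime κ L R₁ r = meanLifetime (radialHazard (theta κ L R₁) r) :=
  (meanLifetime_radialHazard _ hr).symm

theorem antitoneOn_fPrime (hκ : 0 < κ) (hκL : -L ≤ κ) : AntitoneOn (fPrime κ L R₁) (Ici 0) :=
  (antitoneOn_meanLifetime_radialHazard ((monotone_theta hκL).monotoneOn _) hκ
    eventually_le_theta).congr fun _ hr => (fPrime_eq_meanLifetime hr).symm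

theorem inv_le_fPrime (hκ : 0 < κ) (hκL : -L ≤ κ) {r : ℝ} (hr : 0 ≤ r) :
    κ⁻¹ ≤ fPrime κ L R₁ r := by
  have hle (x : ℝ) : theta κ L R₁ x ≤ κ := by
    unfold theta
    split_ifs
    exacts [hκL, le_rfl]
  rw [fPrime_eq_meanLifetime hr]
  exact inv_le_meanLifetime_radialHazard ((monotone_theta hκL).monotoneOn _) hκ
    eventually_le_theta (fun x _ => hle x) r

theorem fPrime_zero (hκ : 0 < κ) (hL : L ≠ 0) (hR₁ : 0 ≤ R₁) :
    fPrime κ L R₁ 0 =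
      Real.exp (L * R₁ ^ 2 / 4) * κ⁻¹ + (Real.exp (L * R₁ ^ 2 / 4) - 1) * L⁻¹ := by
  rw [fPrime_eq_meanLifetime le_rfl,
    meanLifetime_congr fun w hw => radialHazard_theta_zero hR₁ (le_of_lt hw),
    meanLifetime_theta hκ hL (by positivity), mul_div_assoc]

end Theta

theorem fPrime_antitone_and_bounds_general (κ L R₁ : ℝ) (hκ : 0 < κ) (hκL : -L ≤ κ) :
    AntitoneOn (fPrime κ L R₁) (Ici 0) ∧
    (∀ r, 0 ≤ r → 1 / κ ≤ fPrime κ L R₁ r ∧ fPrime κ L R₁ r ≤ fPrime κ L R₁ 0) ∧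
    (0 ≤ R₁ → L ≠ 0 → fPrime κ L R₁ 0 =
      Real.exp (L * R₁ ^ 2 / 4) * κ⁻¹ + (Real.exp (L * R₁ ^ 2 / 4) - 1) * L⁻¹) := by
  have hanti : AntitoneOn (fPrime κ L R₁) (Ici 0) := antitoneOn_fPrime hκ hκL
  refine ⟨hanti, fun r hr => ⟨?_, hanti self_mem_Ici hr hr⟩, fun hR₁ hL => fPrime_zero hκ hL hR₁⟩
  rw [one_div]
  exact inv_le_fPrime hκ hκL hr

/-- `f'` is nonincreasing on `[0, ∞)`; consequently for every `r ≥ 0`,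
`1/κ ≤ f'(r) ≤ f'(0)`, where `f'(0) = exp(L·R₁²/4)·κ⁻¹ + (exp(L·R₁²/4) − 1)·L⁻¹`. -/
theorem fPrime_antitone_and_bounds (κ L R₁ : ℝ) (hκ : 0 < κ) (hL : 0 < L) (hR₁ : 0 ≤ R₁) :
    AntitoneOn (fPrime κ L R₁) (Set.Ici 0) ∧
    (∀ r, 0 ≤ r → 1 / κ ≤ fPrime κ L R₁ r ∧ fPrime κ L R₁ r ≤ fPrime κ L R₁ 0) ∧
    fPrime κ L R₁ 0 =
      Real.exp (L * R₁ ^ 2 / 4) * κ⁻¹ + (Real.exp (L * R₁ ^ 2 / 4) - 1) * L⁻¹ := by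
  obtain ⟨hanti, hbounds, hzero⟩ := fPrime_antitone_and_bounds_general κ L R₁ hκ (by linarith)
  exact ⟨hanti, hbounds, hzero hR₁ hL.ne'⟩
end

section
/- Let ε ∈ (0, 1), C₃ > 0, L ≥ 0 and M > 0 be constants with (L/2)·ε/(1 − ε) < C₃. Let g : [0, ∞) → [0, ∞) be a continuous function such that for all t ≥ 0: (C₃ + L/2)·t^ε·∫_0^1 g(ts) ds ≤ (L/2)·t^ε·∫_0^1∫_0^1 g(t·s₁·s₂) ds₂ ds₁ + M. Then sup over t ≥ 0 of t^ε·∫_0^1 g(ts) ds is at most 2M/( C₃ − (L/2)·ε/(1 − ε) ). -/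
/-!
Averaging `f ↦ ∫₀¹ f (t s) ds` multiplies a bound `K` on `x ^ ε f x` by at most
`∫₀¹ s ^ (-ε) ds = 1 / (1 - ε)`. So if `K` is the supremum of `x ^ ε f x` over `[0, T]` and
`a t ^ ε f t ≤ b t ^ ε ∫₀¹ f (t s) ds + M` there, then `a K ≤ b K / (1 - ε) + M`. As `K` is finite,
the first term on the right can be absorbed when `b / (1 - ε) < a`, and the resulting bound on `K`
does not depend on `T`. The theorem is the case where `f` is itself the average of `g`.
-/

open MeasureTheory Set

section

variable {E : Type*} [NormedAddCommGroup E] {ε : ℝ}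

/-- The Hardy (Cesàro) averaging operator, `(1 / t) ∫₀ᵗ f` for `t ≠ 0`. Integrating the rescaled
function over `[0, 1]` gives it the value `f 0` at `t = 0` (for complete `E`; in an incomplete space
every Bochner integral is `0`). -/
noncomputable def hardyAverage [NormedSpace ℝ E] (f : ℝ → E) (t : ℝ) : E :=
  ∫ s in (0 : ℝ)..1, f (t * s)

/-- The functions on `[0, ∞)` that are locally bounded for the weight `x ^ ε`. For `ε < 1` this is
a class of locally integrable functions that is stable under averaging. Values on `(-∞, 0)` are
ignored. -/
structure RpowLocallyBounded (ε : ℝ) (f : ℝ → E) : Prop where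
  aestronglyMeasurable : AEStronglyMeasurable f (volume.restrict (Ioi 0))
  bddAbove (T : ℝ) : BddAbove ((fun x ↦ x ^ ε * ‖f x‖) '' Icc 0 T)

theorem rpowLocallyBounded_of_continuousOn {f : ℝ → E} (hε : 0 ≤ ε)
    (hf : ContinuousOn f (Ici 0)) : RpowLocallyBounded ε f where
  aestronglyMeasurable :=
    (hf.mono Ioi_subset_Ici_self).aestronglyMeasurable measurableSet_Ioi
  bddAbove _ := isCompact_Icc.bddAbove_image <|
    (Real.continuous_rpow_const hε).continuousOn.mul (hf.mono Icc_subset_Ici_self).norm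

theorem integral_rpow_neg_zero_one (hε : ε < 1) :
    ∫ s in (0 : ℝ)..1, s ^ (-ε) = 1 / (1 - ε) := by
  rw [integral_rpow (Or.inl (by linarith)), Real.one_rpow, Real.zero_rpow (by linarith),
    sub_zero, neg_add_eq_sub]

theorem rpow_mul_hardyAverage_le {f : ℝ → ℝ} {t K : ℝ} (hε : ε < 1) (ht : 0 ≤ t)
    (hf : IntervalIntegrable (fun s ↦ f (t * s)) volume 0 1)
    (hK : ∀ x ∈ Icc 0 t, x ^ ε * f x ≤ K) :
    t ^ ε * hardyAverage f t ≤ K / (1 - ε) := by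
  have pointwise : ∀ s ∈ Ioo (0 : ℝ) 1, t ^ ε * f (t * s) ≤ K * s ^ (-ε) := by
    rintro s ⟨hs₀, hs₁⟩
    have hts := hK (t * s) ⟨by positivity, mul_le_of_le_one_right ht hs₁.le⟩
    rw [Real.mul_rpow ht hs₀.le] at hts
    rw [Real.rpow_neg hs₀.le, ← div_eq_mul_inv, le_div_iff₀ (by positivity)]
    linarith
  calc t ^ ε * hardyAverage f t
      = ∫ s in (0 : ℝ)..1, t ^ ε * f (t * s) :=
        (intervalIntegral.integral_const_mul _ _).symm
    _ ≤ ∫ s in (0 : ℝ)..1, K * s ^ (-ε) :=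
        intervalIntegral.integral_mono_on_of_le_Ioo zero_le_one (hf.const_mul _)
          ((intervalIntegral.intervalIntegrable_rpow' (by linarith)).const_mul _) pointwise
    _ = K / (1 - ε) := by
        rw [intervalIntegral.integral_const_mul, integral_rpow_neg_zero_one hε, mul_one_div]

namespace RpowLocallyBounded

variable {f : ℝ → E}

theorem intervalIntegrable (hf : RpowLocallyBounded ε f) (hε : ε < 1) {T : ℝ} (hT : 0 ≤ T) :
    IntervalIntegrable f volume 0 T := by
  obtain ⟨B, hB⟩ := hf.bddAbove T
  have dominated : ∀ x ∈ Ioc 0 T, ‖f x‖ ≤ B * x ^ (-ε) := by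
    rintro x ⟨hx₀, hxT⟩
    rw [Real.rpow_neg hx₀.le, ← div_eq_mul_inv, le_div_iff₀ (by positivity), mul_comm]
    exact hB (mem_image_of_mem _ ⟨hx₀.le, hxT⟩)
  refine ((intervalIntegral.intervalIntegrable_rpow' (by linarith)).const_mul B).mono_fun'
    (g := fun x ↦ B * x ^ (-ε)) ?_ ?_
  · rw [uIoc_of_le hT]
    exact hf.aestronglyMeasurable.mono_set Ioc_subset_Ioi_self
  · rw [uIoc_of_le hT]
    exact ae_restrict_of_forall_mem measurableSet_Ioc dominated

theorem intervalIntegrable_comp_mul_left (hf : RpowLocallyBounded ε f) (hε : ε < 1) {t : ℝ}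
    (ht : 0 ≤ t) : IntervalIntegrable (fun s ↦ f (t * s)) volume 0 1 := by
  rcases ht.eq_or_lt with rfl | ht₀
  · simp
  · simpa [ht₀.ne'] using (hf.intervalIntegrable hε ht).comp_mul_left (c := t)

variable [NormedSpace ℝ E]

theorem continuousOn_hardyAverage (hf : RpowLocallyBounded ε f) (hε : ε < 1) :
    ContinuousOn (hardyAverage f) (Ioi 0) := by
  have primitive : ContinuousOn (fun t ↦ ∫ x in (0 : ℝ)..t, f x) (Ioi 0) := by
    intro t (ht : 0 < t)
    have hcont := intervalIntegral.continuousOn_primitive_interval'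
      (hf.intervalIntegrable hε (by linarith : 0 ≤ t + 1)) left_mem_uIcc
    rw [uIcc_of_le (by linarith)] at hcont
    exact (hcont.continuousAt (Icc_mem_nhds ht (lt_add_one t))).continuousWithinAt
  refine ((continuousOn_inv₀.mono fun t (ht : 0 < t) ↦ ht.ne').smul primitive).congr ?_
  intro t (ht : 0 < t)
  simp [hardyAverage, intervalIntegral.integral_comp_mul_left f ht.ne']

protected theorem hardyAverage (hf : RpowLocallyBounded ε f) (hε : ε < 1) :
    RpowLocallyBounded ε (hardyAverage f) where
  aestronglyMeasurable :=
    (hf.continuousOn_hardyAverage hε).aestronglyMeasurable measurableSet_Ioi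
  bddAbove T := by
    obtain ⟨B, hB⟩ := hf.bddAbove T
    refine ⟨B / (1 - ε), forall_mem_image.2 fun t ⟨ht₀, htT⟩ ↦ ?_⟩
    calc t ^ ε * ‖hardyAverage f t‖
        ≤ t ^ ε * hardyAverage (fun x ↦ ‖f x‖) t :=
          mul_le_mul_of_nonneg_left
            (intervalIntegral.norm_integral_le_integral_norm zero_le_one) (by positivity)
      _ ≤ B / (1 - ε) :=
          rpow_mul_hardyAverage_le hε ht₀ (hf.intervalIntegrable_comp_mul_left hε ht₀).norm
            fun x hx ↦ hB (mem_image_of_mem _ ⟨hx.1, hx.2.trans htT⟩)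

theorem bddAbove_image_rpow_mul {f : ℝ → ℝ} (hf : RpowLocallyBounded ε f) (T : ℝ) :
    BddAbove ((fun x ↦ x ^ ε * f x) '' Icc 0 T) :=
  (hf.bddAbove T).imp fun _ hB ↦ forall_mem_image.2 fun _ hx ↦
    (mul_le_mul_of_nonneg_left (Real.le_norm_self _) (Real.rpow_nonneg hx.1 _)).trans
      (hB (mem_image_of_mem _ hx))

theorem rpow_mul_le_of_le_hardyAverage {f : ℝ → ℝ} {a b M : ℝ} (hf : RpowLocallyBounded ε f)
    (hε : ε < 1) (hb : 0 ≤ b) (hba : b / (1 - ε) < a)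
    (hineq : ∀ t, 0 ≤ t → a * t ^ ε * f t ≤ b * t ^ ε * hardyAverage f t + M)
    {t : ℝ} (ht : 0 ≤ t) : t ^ ε * f t ≤ M / (a - b / (1 - ε)) := by
  have ha : 0 < a := (div_nonneg hb (by linarith)).trans_lt hba
  set K := sSup ((fun x ↦ x ^ ε * f x) '' Icc 0 t)
  have le_K : ∀ x ∈ Icc 0 t, x ^ ε * f x ≤ K := fun x hx ↦
    le_csSup (hf.bddAbove_image_rpow_mul t) (mem_image_of_mem _ hx)
  have self_bound : K ≤ (b * (K / (1 - ε)) + M) / a := by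
    refine csSup_le ((nonempty_Icc.2 ht).image _) (forall_mem_image.2 fun u ⟨hu₀, hut⟩ ↦ ?_)
    have average_le := rpow_mul_hardyAverage_le hε hu₀
      (hf.intervalIntegrable_comp_mul_left hε hu₀) fun x hx ↦ le_K x ⟨hx.1, hx.2.trans hut⟩
    rw [le_div_iff₀ ha]
    linarith [hineq u hu₀, mul_le_mul_of_nonneg_left average_le hb]
  have absorbed : K ≤ M / (a - b / (1 - ε)) := by
    rw [le_div_iff₀ ha] at self_bound
    rw [le_div_iff₀ (sub_pos.2 hba)]
    linear_combination self_bound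
  exact (le_K t (right_mem_Icc.2 ht)).trans absorbed

end RpowLocallyBounded

end

theorem bootstrap_time_average_bound_general {ε C₃ L M : ℝ} (hε : ε < 1) (hL : 0 ≤ L)
    (hsmall : L / 2 * (ε / (1 - ε)) < C₃) {g : ℝ → ℝ} (hg : RpowLocallyBounded ε g)
    (hineq : ∀ t, 0 ≤ t → (C₃ + L / 2) * t ^ ε * hardyAverage g t ≤
      L / 2 * t ^ ε * hardyAverage (hardyAverage g) t + M) {t : ℝ} (ht : 0 ≤ t) :
    t ^ ε * hardyAverage g t ≤ M / (C₃ - L / 2 * (ε / (1 - ε))) := by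
  have coeff_eq : L / 2 / (1 - ε) = L / 2 * (ε / (1 - ε)) + L / 2 := by
    field_simp [(sub_pos.2 hε).ne']
    ring
  have bound := (hg.hardyAverage hε).rpow_mul_le_of_le_hardyAverage hε (by linarith)
    (by linarith) hineq ht
  rwa [coeff_eq, add_sub_add_right_eq_sub] at bound

/-- deterministic bootstrap (continuity) argument. If a continuous
nonnegative `g : [0,∞) → [0,∞)` satisfies, for all `t ≥ 0`,
`(C₃ + L/2)·t^ε·∫₀¹ g(ts) ds ≤ (L/2)·t^ε·∫₀¹∫₀¹ g(ts₁s₂) ds₂ ds₁ + M`,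
and `(L/2)·ε/(1−ε) < C₃`, then `t^ε·∫₀¹ g(ts) ds ≤ 2M/(C₃ − (L/2)·ε/(1−ε))`
for all `t ≥ 0`. -/
theorem bootstrap_time_average_bound
    (ε C₃ L M : ℝ) (hε0 : 0 < ε) (hε1 : ε < 1) (hC₃ : 0 < C₃) (hL : 0 ≤ L)
    (hM : 0 < M) (hsmall : L / 2 * (ε / (1 - ε)) < C₃)
    (g : ℝ → ℝ) (hg_cont : ContinuousOn g (Set.Ici 0))
    (hg_nonneg : ∀ t, 0 ≤ t → 0 ≤ g t)
    (hineq : ∀ t, 0 ≤ t →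
      (C₃ + L / 2) * t ^ ε * ∫ s in (0 : ℝ)..1, g (t * s) ≤
        L / 2 * t ^ ε * (∫ s₁ in (0 : ℝ)..1, ∫ s₂ in (0 : ℝ)..1, g (t * s₁ * s₂))
          + M) :
    ∀ t, 0 ≤ t →
      t ^ ε * ∫ s in (0 : ℝ)..1, g (t * s) ≤ 2 * M / (C₃ - L / 2 * (ε / (1 - ε))) := by
  intro t ht
  have sharp := bootstrap_time_average_bound_general hε1 hL hsmall
    (rpowLocallyBounded_of_continuousOn hε0.le hg_cont) hineq ht
  exact sharp.trans (div_le_div_of_nonneg_right (by linarith) (sub_pos.2 hsmall).le)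
end
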